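/- Let E ⊆ G be precisely monotone, assume the Hörmander condition, and suppose the origin (0,0) lies in ∂E. Then either the horizontal plane {(ζ,0) : ζ ∈ Z} is contained in ∂E, or there exist a unit vector ξ ∈ Z, an open neighborhood W of the origin in ξ^⊥ × T (where ξ^⊥ is the orthogonal complement of ξ in Z), and a continuous function ψ : W → ℝ such that: (i) {(η + ψ(η,τ)ξ, τ + ψ(η,τ)Q(η,ξ)) : (η,τ) ∈ W} ⊆ ∂E; (ii) {(η + sξ, τ + sQ(η,ξ)) : (η,τ) ∈ W, s > ψ(η,τ)} ⊆ Int(E); (iii) {(η + sξ, τ + sQ(η,ξ)) : (η,τ) ∈ W, s < ψ(η,τ)} ⊆ Int(G∖E). -/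

import Mathlib

/- Step-two Carnot group `G = Z × T` with `Z = ℝ^m`, `T = ℝ^ℓ` and group law
`(z,t)·(ζ,τ) = (z+ζ, t+τ+Q(z,ζ))` for a bilinear skew-symmetric `Q`. -/

noncomputable section

abbrev ZS (m : ℕ) := EuclideanSpace ℝ (Fin m)

abbrev TS (l : ℕ) := EuclideanSpace ℝ (Fin l)

/-- Group law of the step-two group. -/
def gmul {m l : ℕ} (Q : ZS m →ₗ[ℝ] ZS m →ₗ[ℝ] TS l)
    (p q : ZS m × TS l) : ZS m × TS l :=
  (p.1 + q.1, p.2 + q.2 + Q p.1 q.1)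

/-- Horizontal convexity. -/
def HConvex {m l : ℕ} (Q : ZS m →ₗ[ℝ] ZS m →ₗ[ℝ] TS l)
    (C : Set (ZS m × TS l)) : Prop :=
  ∀ p : ZS m × TS l, ∀ u : ZS m, p ∈ C → gmul Q p (u, 0) ∈ C →
    ∀ s : ℝ, 0 ≤ s → s ≤ 1 → gmul Q p (s • u, 0) ∈ C

/-!
Suppose `p` is interior to `E` and the horizontal line from `p` in the direction `u` meets the
closure of `Eᶜ` at time `c`. A horizontal segment that starts near `p` and passes through a point
of `Eᶜ` cannot meet `E` again, so from points of `Eᶜ` near the line one may move by any horizontal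
vector close to a positive multiple of `u` and stay in `Eᶜ`. By the Hörmander condition, finitely
many such moves reach a full neighbourhood of every later point of the line. These later points are
therefore interior to `Eᶜ`.

For precisely monotone `E` this applies to `E` and to `Eᶜ`. Hence a horizontal line through a
boundary point that leaves the boundary crosses it exactly once and, suitably oriented, passes from
the interior of `Eᶜ` to the interior of `E`. Crossing is an open condition on the line, and the
crossing time is continuous because both sides are open.
-/

open Filter Topology

section FrontierAndContinuity

variable {X Y : Type*} [TopologicalSpace X] [TopologicalSpace Y]

theorem exists_mem_frontier_of_isPreconnected {S E : Set X} (hS : IsPreconnected S)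
    (hE : (S ∩ interior E).Nonempty) (hEc : (S ∩ interior Eᶜ).Nonempty) :
    (S ∩ frontier E).Nonempty := by
  by_contra hdisj
  have hcover : S ⊆ interior E ∪ interior Eᶜ := by
    rw [← compl_frontier_eq_union_interior]
    exact fun x hxS hxE => hdisj ⟨x, hxS, hxE⟩
  obtain ⟨x, -, hxE, hxEc⟩ :=
    hS _ _ isOpen_interior isOpen_interior hcover hE hEc
  exact interior_subset hxEc (interior_subset hxE)

theorem continuousOn_of_isOpen_epigraph_hypograph {Φ : X → ℝ → Y} (hΦ : ∀ s, Continuous (Φ · s))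
    {U V : Set Y} (hU : IsOpen U) (hV : IsOpen V) (hUV : Disjoint U V)
    {W : Set X} {ψ : X → ℝ} (hepi : ∀ x ∈ W, ∀ s, ψ x < s → Φ x s ∈ U)
    (hhypo : ∀ x ∈ W, ∀ s, s < ψ x → Φ x s ∈ V) : ContinuousOn ψ W := by
  intro x hx
  refine tendsto_order.2 ⟨fun a ha => ?_, fun a ha => ?_⟩
  · obtain ⟨b, hab, hbx⟩ := exists_between ha
    filter_upwards [self_mem_nhdsWithin, nhdsWithin_le_nhds <|
      (hV.preimage (hΦ b)).mem_nhds (hhypo x hx b hbx)] with y hy hyb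
    exact hab.trans_le <| not_lt.1 fun hlt => hUV.notMem_of_mem_left (hepi y hy b hlt) hyb
  · obtain ⟨b, hxb, hba⟩ := exists_between ha
    filter_upwards [self_mem_nhdsWithin, nhdsWithin_le_nhds <|
      (hU.preimage (hΦ b)).mem_nhds (hepi x hx b hxb)] with y hy hyb
    exact lt_of_le_of_lt (not_lt.1 fun hlt => hUV.notMem_of_mem_left hyb (hhypo y hy b hlt)) hba

end FrontierAndContinuity

theorem sqrt_add_sqrt_neg_mul_sqrt_sub_sqrt_neg (r : ℝ) :
    (√r + √(-r)) * (√r - √(-r)) = r := by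
  rcases le_total 0 r with hr | hr
  · rw [Real.sqrt_eq_zero_of_nonpos (neg_nonpos.2 hr), add_zero, sub_zero, Real.mul_self_sqrt hr]
  · rw [Real.sqrt_eq_zero_of_nonpos hr, zero_add, zero_sub, mul_neg,
      Real.mul_self_sqrt (neg_nonneg.2 hr), neg_neg]

variable {m l : ℕ} {Q : ZS m →ₗ[ℝ] ZS m →ₗ[ℝ] TS l}

section GroupLaw

theorem gmul_zero (p : ZS m × TS l) : gmul Q p 0 = p := by
  simp [gmul]

theorem zero_gmul (p : ZS m × TS l) : gmul Q 0 p = p := by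
  simp [gmul]

theorem gmul_assoc (p q r : ZS m × TS l) :
    gmul Q (gmul Q p q) r = gmul Q p (gmul Q q r) := by
  ext1
  · exact add_assoc _ _ _
  · simp only [gmul, map_add, LinearMap.add_apply]
    abel

theorem neg_gmul_self (hQ : Q.IsAlt) (p : ZS m × TS l) : gmul Q (-p) p = 0 := by
  simp [gmul, hQ.self_eq_zero]

theorem gmul_neg_self (hQ : Q.IsAlt) (p : ZS m × TS l) : gmul Q p (-p) = 0 := by
  simp [gmul, hQ.self_eq_zero]

theorem gmul_smul_smul (hQ : Q.IsAlt) (u : ZS m) (c d : ℝ) (σ τ : TS l) :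
    gmul Q (c • u, σ) (d • u, τ) = ((c + d) • u, σ + τ) := by
  simp [gmul, hQ.self_eq_zero, add_smul]

-- The perturbations `v₁, …, v₄` of the step `h • u` satisfy `∑ vⱼ = 0` and `∑ j vⱼ = 0`; the latter
-- cancels the terms `Q u vⱼ`, which are linear in the perturbations.
theorem gmul_four_horizontal (hQ : Q.IsAlt) (u a b : ZS m) (h : ℝ) :
    gmul Q (h • u + a, 0) (gmul Q (h • u + (b - (2 : ℝ) • a), 0)
      (gmul Q (h • u + (a - (2 : ℝ) • b), 0) (h • u + b, 0))) =
      ((4 * h) • u, (2 : ℝ) • Q a b) := by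
  ext1
  · simp only [gmul]
    module
  · simp only [gmul, map_add, map_sub, map_smul, LinearMap.add_apply, LinearMap.sub_apply,
      LinearMap.smul_apply, hQ.self_eq_zero, ← hQ.neg u a, ← hQ.neg u b, ← hQ.neg a b]
    module

theorem continuous_gmul (Q : ZS m →ₗ[ℝ] ZS m →ₗ[ℝ] TS l) :
    Continuous fun x : (ZS m × TS l) × (ZS m × TS l) => gmul Q x.1 x.2 := by
  change Continuous fun x : (ZS m × TS l) × (ZS m × TS l) =>
    (x.1.1 + x.2.1, x.1.2 + x.2.2 + Q.toContinuousBilinearMap x.1.1 x.2.1)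
  fun_prop

theorem tendsto_gmul {α : Type*} {f : Filter α} {p q : α → ZS m × TS l} {p₀ q₀ : ZS m × TS l}
    (hp : Tendsto p f (𝓝 p₀)) (hq : Tendsto q f (𝓝 q₀)) :
    Tendsto (fun i => gmul Q (p i) (q i)) f (𝓝 (gmul Q p₀ q₀)) :=
  ((continuous_gmul Q).tendsto (p₀, q₀)).comp (hp.prodMk_nhds hq)

end GroupLaw

section Hormander

/-- The Hörmander condition: the values of `Q` span the centre `T`. -/
def HormanderCondition (Q : ZS m →ₗ[ℝ] ZS m →ₗ[ℝ] TS l) : Prop :=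
  Submodule.span ℝ (Set.range fun z : ZS m × ZS m => Q z.1 z.2) = ⊤

theorem HormanderCondition.exists_basis (hH : HormanderCondition Q) :
    ∃ (e e' : Fin l → ZS m) (B : Module.Basis (Fin l) ℝ (TS l)), ∀ k, B k = Q (e k) (e' k) := by
  let B := Module.Basis.ofSpan (Eq.ge hH)
  have hB (i) : ∃ z : ZS m × ZS m, Q z.1 z.2 = B i :=
    Module.Basis.ofSpan_subset (Eq.ge hH) (Set.mem_range_self i)
  choose z hz using hB
  have : Fintype _ := FiniteDimensional.fintypeBasisIndex B
  let σ := B.indexEquiv (EuclideanSpace.basisFun (Fin l) ℝ).toBasis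
  exact ⟨fun k => (z (σ.symm k)).1, fun k => (z (σ.symm k)).2, B.reindex σ,
    fun k => by rw [B.reindex_apply, hz]⟩

end Hormander

section HorizontalLine

/-- The horizontal line through `p` in the direction `u`, parametrised so that it is at `p` at
time `0`. -/
def horizontalLine (Q : ZS m →ₗ[ℝ] ZS m →ₗ[ℝ] TS l) (p : ZS m × TS l) (u : ZS m) (s : ℝ) :
    ZS m × TS l :=
  gmul Q p (s • u, 0)

theorem horizontalLine_apply (p : ZS m × TS l) (u : ZS m) (s : ℝ) :
    horizontalLine Q p u s = (p.1 + s • u, p.2 + s • Q p.1 u) := by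
  simp [horizontalLine, gmul]

theorem horizontalLine_zero (p : ZS m × TS l) (u : ZS m) : horizontalLine Q p u 0 = p := by
  simp [horizontalLine_apply]

theorem horizontalLine_one (p : ZS m × TS l) (u : ZS m) :
    horizontalLine Q p u 1 = gmul Q p (u, 0) := by
  rw [horizontalLine, one_smul]

theorem horizontalLine_smul (p : ZS m × TS l) (u : ZS m) (c s : ℝ) :
    horizontalLine Q p (c • u) s = horizontalLine Q p u (s * c) := by
  rw [horizontalLine, horizontalLine, smul_smul]

theorem horizontalLine_neg (p : ZS m × TS l) (u : ZS m) (s : ℝ) :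
    horizontalLine Q p (-u) s = horizontalLine Q p u (-s) := by
  rw [horizontalLine, horizontalLine, smul_neg, neg_smul]

theorem horizontalLine_horizontalLine (hQ : Q.IsAlt) (p : ZS m × TS l) (u : ZS m) (c d : ℝ) :
    horizontalLine Q (horizontalLine Q p u c) u d = horizontalLine Q p u (c + d) := by
  simp only [horizontalLine, gmul_assoc, gmul_smul_smul hQ, add_zero]

theorem continuous_horizontalLine {X : Type*} [TopologicalSpace X] {p : X → ZS m × TS l}
    {s : X → ℝ} (hp : Continuous p) (hs : Continuous s) (u : ZS m) :
    Continuous fun x => horizontalLine Q (p x) u (s x) :=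
  (continuous_gmul Q).comp (hp.prodMk (by fun_prop))

theorem HConvex.ordConnected_preimage_horizontalLine (hQ : Q.IsAlt) {C : Set (ZS m × TS l)}
    (hC : HConvex Q C) (p : ZS m × TS l) (u : ZS m) :
    (horizontalLine Q p u ⁻¹' C).OrdConnected := by
  refine Set.ordConnected_of_Ioo fun a ha b hb hab s hs => ?_
  have hmem := hC (horizontalLine Q p u a) ((b - a) • u) ha
    (by rw [← horizontalLine, horizontalLine_horizontalLine hQ, add_sub_cancel]; exact hb)
    ((s - a) / (b - a)) (div_nonneg (sub_nonneg.2 hs.1.le) (sub_nonneg.2 hab.le))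
    (div_le_one_of_le₀ (sub_le_sub_right hs.2.le a) (sub_nonneg.2 hab.le))
  rwa [smul_smul, div_mul_cancel₀ _ (sub_pos.2 hab).ne', ← horizontalLine,
    horizontalLine_horizontalLine hQ, add_sub_cancel] at hmem

end HorizontalLine

section Propagation

variable {α : Type*} {f : Filter α}

/-- Right translation by `g i` keeps points of `A` near `x` inside `A`, eventually as `i` runs
along `f`. -/
def EventuallyStable (Q : ZS m →ₗ[ℝ] ZS m →ₗ[ℝ] TS l) (A : Set (ZS m × TS l)) (x : ZS m × TS l)
    (f : Filter α) (g : α → ZS m × TS l) : Prop :=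
  ∀ᶠ y : (ZS m × TS l) × α in 𝓝 x ×ˢ f, y.1 ∈ A → gmul Q y.1 (g y.2) ∈ A

theorem EventuallyStable.trans {A : Set (ZS m × TS l)} {x g₀ : ZS m × TS l}
    {g g' : α → ZS m × TS l} (hg : EventuallyStable Q A x f g) (hg₀ : Tendsto g f (𝓝 g₀))
    (hg' : EventuallyStable Q A (gmul Q x g₀) f g') :
    EventuallyStable Q A x f fun i => gmul Q (g i) (g' i) := by
  have hstep : Tendsto (fun y : (ZS m × TS l) × α => (gmul Q y.1 (g y.2), y.2))
      (𝓝 x ×ˢ f) (𝓝 (gmul Q x g₀) ×ˢ f) :=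
    (tendsto_gmul tendsto_fst (hg₀.comp tendsto_snd)).prodMk tendsto_snd
  filter_upwards [hg, hstep.eventually hg'] with y hy hy' hyA
  rw [← gmul_assoc]
  exact hy' (hy hyA)

theorem EventuallyStable.gmul_mem_interior (hQ : Q.IsAlt) {A : Set (ZS m × TS l)}
    {x g : ZS m × TS l} (hstable : EventuallyStable Q A x (𝓝 g) id) (hx : x ∈ closure A) :
    gmul Q x g ∈ interior A := by
  have hdiv : Tendsto (fun y : (ZS m × TS l) × (ZS m × TS l) => (y.1, gmul Q (-y.1) y.2))
      (𝓝 x ×ˢ 𝓝 (gmul Q x g)) (𝓝 x ×ˢ 𝓝 g) := by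
    have hlim := tendsto_gmul (Q := Q) (tendsto_fst (f := 𝓝 x) (g := 𝓝 (gmul Q x g))).neg
      tendsto_snd
    rw [← gmul_assoc, neg_gmul_self hQ, zero_gmul] at hlim
    exact tendsto_fst.prodMk hlim
  have hnear : ∀ᶠ y in 𝓝 x ×ˢ 𝓝 (gmul Q x g), y.1 ∈ A → y.2 ∈ A := by
    filter_upwards [hdiv.eventually hstable] with y hy hyA
    simpa only [id, ← gmul_assoc, gmul_neg_self hQ, zero_gmul] using hy hyA
  obtain ⟨a, haA, ha⟩ := ((mem_closure_iff_frequently.1 hx).and_eventually hnear.curry).exists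
  rw [mem_interior_iff_mem_nhds]
  filter_upwards [ha] with y hy using hy haA

variable {E : Set (ZS m × TS l)} {p : ZS m × TS l} {u : ZS m} {c d : ℝ}

theorem eventuallyStable_compl_horizontal (hQ : Q.IsAlt) (hE : HConvex Q E)
    (hp : p ∈ interior E) (hc : 0 < c) (hd : 0 < d) {v : α → ZS m}
    (hv : Tendsto v f (𝓝 (d • u))) :
    EventuallyStable Q Eᶜ (horizontalLine Q p u c) f fun i => (v i, 0) := by
  have hstart : horizontalLine Q (horizontalLine Q p u c) (d • u) (-(c / d)) = p := by
    rw [horizontalLine_smul, neg_mul, div_mul_cancel₀ _ hd.ne', horizontalLine_horizontalLine hQ,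
      add_neg_cancel, horizontalLine_zero]
  have hback : Tendsto (fun y : (ZS m × TS l) × α => horizontalLine Q y.1 (v y.2) (-(c / d)))
      (𝓝 (horizontalLine Q p u c) ×ˢ f) (𝓝 p) :=
    (tendsto_gmul tendsto_fst (((hv.comp tendsto_snd).const_smul _).prodMk_nhds
      tendsto_const_nhds)).mono_right (congrArg 𝓝 hstart).le
  -- A segment that starts near `p` and leaves `E` at `y.1` cannot return to `E`.
  filter_upwards [hback.eventually (isOpen_interior.mem_nhds hp)] with y hyp hyE hyvE
  have hzero : (0 : ℝ) ∈ horizontalLine Q y.1 (v y.2) ⁻¹' E :=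
    (hE.ordConnected_preimage_horizontalLine hQ _ _).out (interior_subset hyp : _ ∈ E)
      (by rwa [Set.mem_preimage, horizontalLine_one])
      ⟨neg_nonpos.2 (div_pos hc hd).le, zero_le_one⟩
  rw [Set.mem_preimage, horizontalLine_zero] at hzero
  exact hyE hzero

theorem EventuallyStable.trans_horizontalLine (hQ : Q.IsAlt) {A : Set (ZS m × TS l)}
    {g g' : α → ZS m × TS l}
    (hg : EventuallyStable Q A (horizontalLine Q p u c) f g)
    (hlim : Tendsto g f (𝓝 (d • u, 0)))
    (hg' : EventuallyStable Q A (horizontalLine Q p u (c + d)) f g') :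
    EventuallyStable Q A (horizontalLine Q p u c) f fun i => gmul Q (g i) (g' i) :=
  hg.trans hlim <| by rwa [← horizontalLine, horizontalLine_horizontalLine hQ]

theorem eventuallyStable_compl_two_smul_apply (hQ : Q.IsAlt) (hE : HConvex Q E)
    (hp : p ∈ interior E) (hc : 0 < c) (hd : 0 < d) {a b : α → ZS m}
    (ha : Tendsto a f (𝓝 0)) (hb : Tendsto b f (𝓝 0)) :
    EventuallyStable Q Eᶜ (horizontalLine Q p u c) f fun i => (d • u, (2 : ℝ) • Q (a i) (b i)) := by
  set h : ℝ := d / 4 with hh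
  have hpos : 0 < h := by positivity
  have hlim {v : α → ZS m} (hv : Tendsto v f (𝓝 0)) :
      Tendsto (fun i => h • u + v i) f (𝓝 (h • u)) := by
    simpa only [add_zero] using hv.const_add (h • u)
  have hstep {c' : ℝ} (hc' : 0 < c') {v : α → ZS m} (hv : Tendsto v f (𝓝 0)) :
      EventuallyStable Q Eᶜ (horizontalLine Q p u c') f fun i => (h • u + v i, 0) :=
    eventuallyStable_compl_horizontal hQ hE hp hc' hpos (hlim hv)
  have hba : Tendsto (fun i => b i - (2 : ℝ) • a i) f (𝓝 0) := by
    simpa only [smul_zero, sub_zero] using hb.sub (ha.const_smul (2 : ℝ))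
  have hab : Tendsto (fun i => a i - (2 : ℝ) • b i) f (𝓝 0) := by
    simpa only [smul_zero, sub_zero] using ha.sub (hb.const_smul (2 : ℝ))
  have hfour := (hstep hc ha).trans_horizontalLine hQ ((hlim ha).prodMk_nhds tendsto_const_nhds) <|
    (hstep (by positivity) hba).trans_horizontalLine hQ
      ((hlim hba).prodMk_nhds tendsto_const_nhds) <|
    (hstep (by positivity) hab).trans_horizontalLine hQ
      ((hlim hab).prodMk_nhds tendsto_const_nhds) (hstep (by positivity) hb)
  simpa only [gmul_four_horizontal hQ, hh, mul_div_cancel₀ d (four_ne_zero' ℝ)] using hfour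

theorem eventuallyStable_compl_smul_apply (hQ : Q.IsAlt) (hE : HConvex Q E)
    (hp : p ∈ interior E) (hc : 0 < c) (hd : 0 < d) (e e' : ZS m) {r : α → ℝ}
    (hr : Tendsto r f (𝓝 0)) :
    EventuallyStable Q Eᶜ (horizontalLine Q p u c) f fun i => (d • u, r i • Q e e') := by
  let a (t : ℝ) : ZS m := (√(t / 2) + √(-(t / 2))) • e
  let b (t : ℝ) : ZS m := (√(t / 2) - √(-(t / 2))) • e'
  have hsplit (t : ℝ) : (2 : ℝ) • Q (a t) (b t) = t • Q e e' := by
    rw [LinearMap.map_smul₂, map_smul, smul_smul, smul_smul, mul_assoc,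
      sqrt_add_sqrt_neg_mul_sqrt_sub_sqrt_neg, mul_div_cancel₀ t (two_ne_zero' ℝ)]
  have ha : Tendsto a (𝓝 0) (𝓝 0) :=
    (by fun_prop : Continuous a).tendsto' _ _ (by simp [a])
  have hb : Tendsto b (𝓝 0) (𝓝 0) :=
    (by fun_prop : Continuous b).tendsto' _ _ (by simp [b])
  simpa only [Function.comp_apply, hsplit] using
    eventuallyStable_compl_two_smul_apply (u := u) hQ hE hp hc hd (ha.comp hr) (hb.comp hr)

theorem eventuallyStable_compl_sum_smul_apply (hQ : Q.IsAlt) (hE : HConvex Q E)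
    (hp : p ∈ interior E) {ι : Type*} (K : Finset ι) (e e' : ι → ZS m) {r : ι → α → ℝ}
    (hr : ∀ k ∈ K, Tendsto (r k) f (𝓝 0)) (hc : 0 < c) (hd : 0 < d) :
    EventuallyStable Q Eᶜ (horizontalLine Q p u c) f
      fun i => (d • u, ∑ k ∈ K, r k i • Q (e k) (e' k)) := by
  classical
  induction K using Finset.induction_on generalizing c d with
  | empty => simpa using eventuallyStable_compl_horizontal hQ hE hp hc hd tendsto_const_nhds
  | insert k K hk ih =>
    have hrk := hr k (Finset.mem_insert_self k K)
    have hfirst := eventuallyStable_compl_smul_apply (u := u) hQ hE hp hc (half_pos hd) (e k) (e' k)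
      hrk
    have hlim : Tendsto (fun i => ((d / 2) • u, r k i • Q (e k) (e' k))) f
        (𝓝 ((d / 2) • u, 0)) := by
      simpa only [zero_smul] using tendsto_const_nhds.prodMk_nhds (hrk.smul_const (Q (e k) (e' k)))
    have hrest := ih (fun j hj => hr j (Finset.mem_insert_of_mem hj))
      (add_pos hc (half_pos hd)) (half_pos hd)
    simpa only [gmul_smul_smul hQ, add_halves, Finset.sum_insert hk] using
      hfirst.trans_horizontalLine hQ hlim hrest

theorem eventuallyStable_compl_central (hQ : Q.IsAlt) (hH : HormanderCondition Q)
    (hE : HConvex Q E) (hp : p ∈ interior E) (hc : 0 < c) (hd : 0 < d) {τ : α → TS l}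
    (hτ : Tendsto τ f (𝓝 0)) :
    EventuallyStable Q Eᶜ (horizontalLine Q p u c) f fun i => (d • u, τ i) := by
  obtain ⟨e, e', B, hB⟩ := hH.exists_basis
  have hcoord (k : Fin l) : Tendsto (fun i => B.coord k (τ i)) f (𝓝 0) :=
    ((B.coord k).continuous_of_finiteDimensional.tendsto' 0 0 (map_zero _)).comp hτ
  have hexpand (σ : TS l) : ∑ k, B.coord k σ • Q (e k) (e' k) = σ := by
    simpa only [hB, Module.Basis.coord_apply] using B.sum_repr σ
  simpa only [hexpand] using eventuallyStable_compl_sum_smul_apply (u := u) hQ hE hp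
    Finset.univ e e' (fun k _ => hcoord k) hc hd

theorem eventuallyStable_compl_nhds (hQ : Q.IsAlt) (hH : HormanderCondition Q)
    (hE : HConvex Q E) (hp : p ∈ interior E) (hc : 0 < c) (hd : 0 < d) :
    EventuallyStable Q Eᶜ (horizontalLine Q p u c) (𝓝 (d • u, 0)) id := by
  let w : ZS m := (d / 2) • u
  have hw : d • u - w = w := by rw [← sub_smul, sub_half]
  let τ (g : ZS m × TS l) : TS l := g.2 - Q w (g.1 - w)
  have hfactor (g : ZS m × TS l) : gmul Q (w, τ g) (g.1 - w, 0) = id g := by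
    simp [gmul, τ]
  have hτ : Tendsto τ (𝓝 (d • u, 0)) (𝓝 0) := by
    have hcont : Continuous τ :=
      continuous_snd.sub ((Q w).continuous_of_finiteDimensional.comp (by fun_prop))
    refine hcont.tendsto' _ _ ?_
    simp only [τ, hw, hQ.self_eq_zero, sub_zero]
  have hhorizontal : Tendsto (fun g : ZS m × TS l => g.1 - w) (𝓝 (d • u, 0)) (𝓝 w) :=
    (by fun_prop : Continuous fun g : ZS m × TS l => g.1 - w).tendsto' _ _ hw
  have htwo := (eventuallyStable_compl_central hQ hH hE hp hc (half_pos hd) hτ).trans_horizontalLine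
    hQ (tendsto_const_nhds.prodMk_nhds hτ)
    (eventuallyStable_compl_horizontal hQ hE hp (add_pos hc (half_pos hd)) (half_pos hd)
      hhorizontal)
  exact (funext hfactor).symm ▸ htwo

theorem horizontalLine_mem_interior_compl_of_lt_of_lt (hQ : Q.IsAlt) (hH : HormanderCondition Q)
    (hE : HConvex Q E) {r s t : ℝ} (hrs : r < s) (hst : s < t)
    (hr : horizontalLine Q p u r ∈ interior E) (hs : horizontalLine Q p u s ∈ closure Eᶜ) :
    horizontalLine Q p u t ∈ interior Eᶜ := by
  have hstable := eventuallyStable_compl_nhds (u := u) hQ hH hE hr (sub_pos.2 hrs) (sub_pos.2 hst)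
  rw [horizontalLine_horizontalLine hQ, add_sub_cancel] at hstable
  have hmem := hstable.gmul_mem_interior hQ hs
  rwa [← horizontalLine, horizontalLine_horizontalLine hQ, add_sub_cancel] at hmem

theorem horizontalLine_mem_interior_compl_of_gt_of_gt (hQ : Q.IsAlt) (hH : HormanderCondition Q)
    (hE : HConvex Q E) {r s t : ℝ} (hrs : s < r) (hst : t < s)
    (hr : horizontalLine Q p u r ∈ interior E) (hs : horizontalLine Q p u s ∈ closure Eᶜ) :
    horizontalLine Q p u t ∈ interior Eᶜ := by
  have hreverse (s : ℝ) : horizontalLine Q p u s = horizontalLine Q p (-u) (-s) := by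
    rw [horizontalLine_neg, neg_neg]
  rw [hreverse] at hr hs ⊢
  exact horizontalLine_mem_interior_compl_of_lt_of_lt hQ hH hE (neg_lt_neg hrs) (neg_lt_neg hst)
    hr hs

end Propagation

section PreciselyMonotone

/-- Precise monotonicity: `E` and its complement are both horizontally convex. -/
def PreciselyMonotone (Q : ZS m →ₗ[ℝ] ZS m →ₗ[ℝ] TS l) (E : Set (ZS m × TS l)) : Prop :=
  HConvex Q E ∧ HConvex Q Eᶜ

variable {E : Set (ZS m × TS l)} {p : ZS m × TS l} {u : ZS m}

/-- The horizontal line through `p` in the direction `u` crosses the boundary of `E` exactly at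
time `s`, passing from the interior of `Eᶜ` to the interior of `E`. Letting `s` depend on `p` turns
this into the description of the boundary as an intrinsic graph. -/
structure CrossesAt (Q : ZS m →ₗ[ℝ] ZS m →ₗ[ℝ] TS l) (E : Set (ZS m × TS l)) (p : ZS m × TS l)
    (u : ZS m) (s : ℝ) : Prop where
  mem_frontier : horizontalLine Q p u s ∈ frontier E
  mem_interior : ∀ t, s < t → horizontalLine Q p u t ∈ interior E
  mem_interior_compl : ∀ t, t < s → horizontalLine Q p u t ∈ interior Eᶜ

theorem PreciselyMonotone.crossesAt (hE : PreciselyMonotone Q E) (hQ : Q.IsAlt)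
    (hH : HormanderCondition Q) {s r : ℝ} (hs : horizontalLine Q p u s ∈ frontier E)
    (hsr : s < r) (hr : horizontalLine Q p u r ∈ interior E) : CrossesAt Q E p u s := by
  have hbelow (t : ℝ) (hts : t < s) : horizontalLine Q p u t ∈ interior Eᶜ :=
    horizontalLine_mem_interior_compl_of_gt_of_gt hQ hH hE.1 hsr hts hr
      (frontier_subset_closure (frontier_compl E ▸ hs))
  refine ⟨hs, fun t hst => ?_, hbelow⟩
  have habove := horizontalLine_mem_interior_compl_of_lt_of_lt hQ hH hE.2 (sub_one_lt s) hst
    (hbelow _ (sub_one_lt s)) (by rw [compl_compl]; exact frontier_subset_closure hs)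
  rwa [compl_compl] at habove

theorem PreciselyMonotone.exists_crossesAt (hE : PreciselyMonotone Q E) (hQ : Q.IsAlt)
    (hH : HormanderCondition Q) {a b : ℝ} (hab : a ≤ b)
    (ha : horizontalLine Q p u a ∈ interior Eᶜ) (hb : horizontalLine Q p u b ∈ interior E) :
    ∃ s, CrossesAt Q E p u s := by
  have hsegment : IsPreconnected (horizontalLine Q p u '' Set.Icc a b) :=
    isPreconnected_Icc.image _
      (continuous_horizontalLine continuous_const continuous_id u).continuousOn
  obtain ⟨_, ⟨s, hs, rfl⟩, hsE⟩ := exists_mem_frontier_of_isPreconnected hsegment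
    ⟨_, Set.mem_image_of_mem _ (Set.right_mem_Icc.2 hab), hb⟩
    ⟨_, Set.mem_image_of_mem _ (Set.left_mem_Icc.2 hab), ha⟩
  have hsb : s ≠ b := fun h => (h ▸ hsE).2 hb
  exact ⟨s, hE.crossesAt hQ hH hsE (hs.2.lt_of_ne hsb) hb⟩

theorem PreciselyMonotone.exists_continuousOn_crossesAt (hE : PreciselyMonotone Q E)
    (hQ : Q.IsAlt) (hH : HormanderCondition Q) {X : Type*} [TopologicalSpace X]
    {β : X → ZS m × TS l} (hβ : Continuous β) {x₀ : X} {s₀ : ℝ} (hx₀ : CrossesAt Q E (β x₀) u s₀) :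
    ∃ W : Set X, IsOpen W ∧ x₀ ∈ W ∧
      ∃ ψ : X → ℝ, ContinuousOn ψ W ∧ ∀ x ∈ W, CrossesAt Q E (β x) u (ψ x) := by
  have hline (s : ℝ) : Continuous fun x => horizontalLine Q (β x) u s :=
    continuous_horizontalLine hβ continuous_const u
  let W : Set X := {x | horizontalLine Q (β x) u (s₀ - 1) ∈ interior Eᶜ} ∩
    {x | horizontalLine Q (β x) u (s₀ + 1) ∈ interior E}
  have hcross (x : X) : ∃ s, x ∈ W → CrossesAt Q E (β x) u s := by
    by_cases hx : x ∈ W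
    · obtain ⟨s, hs⟩ := hE.exists_crossesAt hQ hH (by linarith) hx.1 hx.2
      exact ⟨s, fun _ => hs⟩
    · exact ⟨0, fun hxW => absurd hxW hx⟩
  choose ψ hψ using hcross
  refine ⟨W, (isOpen_interior.preimage (hline _)).inter (isOpen_interior.preimage (hline _)),
    ⟨hx₀.mem_interior_compl _ (sub_one_lt s₀), hx₀.mem_interior _ (lt_add_one s₀)⟩, ψ, ?_, hψ⟩
  exact continuousOn_of_isOpen_epigraph_hypograph hline isOpen_interior isOpen_interior
    (disjoint_compl_right.mono interior_subset interior_subset)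
    (fun x hx => (hψ x hx).mem_interior) (fun x hx => (hψ x hx).mem_interior_compl)

theorem CrossesAt.smul_of_pos (h : CrossesAt Q E p u 0) {c : ℝ} (hc : 0 < c) :
    CrossesAt Q E p (c • u) 0 := by
  constructor
  · rw [horizontalLine_smul, zero_mul]
    exact h.mem_frontier
  · intro t ht
    rw [horizontalLine_smul]
    exact h.mem_interior _ (mul_pos ht hc)
  · intro t ht
    rw [horizontalLine_smul]
    exact h.mem_interior_compl _ (mul_neg_of_neg_of_pos ht hc)

theorem PreciselyMonotone.exists_ne_zero_crossesAt (hE : PreciselyMonotone Q E) (hQ : Q.IsAlt)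
    (hH : HormanderCondition Q) (hp : p ∈ frontier E) {ζ : ZS m}
    (hζ : gmul Q p (ζ, 0) ∉ frontier E) : ∃ u ≠ 0, CrossesAt Q E p u 0 := by
  have hzero (u : ZS m) : horizontalLine Q p u 0 ∈ frontier E := by rwa [horizontalLine_zero]
  have hζ0 : ζ ≠ 0 := by
    rintro rfl
    exact hζ ((gmul_zero p).symm ▸ hp)
  rw [← Set.mem_compl_iff, compl_frontier_eq_union_interior, ← horizontalLine_one] at hζ
  rcases hζ with hint | hext
  · exact ⟨ζ, hζ0, hE.crossesAt hQ hH (hzero ζ) one_pos hint⟩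
  · have hback := horizontalLine_mem_interior_compl_of_gt_of_gt hQ hH hE.2 one_pos
      neg_one_lt_zero hext (by rw [compl_compl]; exact frontier_subset_closure (hzero ζ))
    rw [compl_compl, ← horizontalLine_neg] at hback
    exact ⟨-ζ, neg_ne_zero.2 hζ0, hE.crossesAt hQ hH (hzero (-ζ)) one_pos hback⟩

theorem PreciselyMonotone.exists_norm_eq_one_crossesAt (hE : PreciselyMonotone Q E) (hQ : Q.IsAlt)
    (hH : HormanderCondition Q) (hp : p ∈ frontier E) {ζ : ZS m}
    (hζ : gmul Q p (ζ, 0) ∉ frontier E) : ∃ ξ : ZS m, ‖ξ‖ = 1 ∧ CrossesAt Q E p ξ 0 := by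
  obtain ⟨u, hu, hcross⟩ := hE.exists_ne_zero_crossesAt hQ hH hp hζ
  exact ⟨‖u‖⁻¹ • u, norm_smul_inv_norm hu, hcross.smul_of_pos (inv_pos.2 (norm_pos_iff.2 hu))⟩

end PreciselyMonotone

/-- **Monotone sets and intrinsic graphs:** at a boundary point (the origin) of a
precisely monotone set, either the horizontal plane is contained in the boundary, or
the boundary is locally an intrinsic graph in some horizontal direction `ξ`. -/
theorem monotone_boundary_is_intrinsic_graph
    (m l : ℕ) (hm : 0 < m) (hl : 0 < l)
    (Q : ZS m →ₗ[ℝ] ZS m →ₗ[ℝ] TS l)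
    (hskew : ∀ z ζ : ZS m, Q z ζ = - Q ζ z)
    (hHorm : Submodule.span ℝ (Set.range fun zz : ZS m × ZS m => Q zz.1 zz.2) = ⊤)
    (E : Set (ZS m × TS l)) (hE : HConvex Q E ∧ HConvex Q Eᶜ)
    (h0 : ((0 : ZS m), (0 : TS l)) ∈ frontier E) :
    (∀ ζ : ZS m, (ζ, (0 : TS l)) ∈ frontier E) ∨
    ∃ ξ : ZS m, ‖ξ‖ = 1 ∧
      ∃ W : Set (↥((ℝ ∙ ξ)ᗮ) × TS l), IsOpen W ∧ (0 : ↥((ℝ ∙ ξ)ᗮ) × TS l) ∈ W ∧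
      ∃ ψ : (↥((ℝ ∙ ξ)ᗮ) × TS l) → ℝ, ContinuousOn ψ W ∧
        (∀ p ∈ W,
          (((p.1 : ZS m) + ψ p • ξ, p.2 + ψ p • Q (p.1 : ZS m) ξ) ∈ frontier E)) ∧
        (∀ p ∈ W, ∀ s : ℝ, ψ p < s →
          (((p.1 : ZS m) + s • ξ, p.2 + s • Q (p.1 : ZS m) ξ) ∈ interior E)) ∧
        (∀ p ∈ W, ∀ s : ℝ, s < ψ p →
          (((p.1 : ZS m) + s • ξ, p.2 + s • Q (p.1 : ZS m) ξ) ∈ interior Eᶜ)) := by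
  have : IsAddTorsionFree (TS l) := .of_isTorsionFree ℝ _
  have hQ : Q.IsAlt := fun z => self_eq_neg.1 (hskew z z)
  refine or_iff_not_imp_left.2 fun hplane => ?_
  obtain ⟨ζ, hζ⟩ := not_forall.1 hplane
  obtain ⟨ξ, hξ, hcross⟩ := PreciselyMonotone.exists_norm_eq_one_crossesAt hE hQ hHorm h0
    (ζ := ζ) (by rwa [Prod.mk_zero_zero, zero_gmul])
  obtain ⟨W, hWopen, h0W, ψ, hψ, hgraph⟩ := PreciselyMonotone.exists_continuousOn_crossesAt
    hE hQ hHorm (X := (ℝ ∙ ξ)ᗮ × TS l) (β := fun p => (p.1, p.2)) (by fun_prop) (x₀ := 0) hcross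
  exact ⟨ξ, hξ, W, hWopen, h0W, ψ, hψ,
    fun p hp => by simpa only [horizontalLine_apply] using (hgraph p hp).mem_frontier,
    fun p hp s hs => by simpa only [horizontalLine_apply] using (hgraph p hp).mem_interior s hs,
    fun p hp s hs => by
      simpa only [horizontalLine_apply] using (hgraph p hp).mem_interior_compl s hs⟩
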